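/- If S ⊆ Q is a weakly infinite dimensional subset of the Hilbert cube, then the complement Q \ S is continuum connected: any two points x, y ∈ Q \ S are contained in a compact connected subset of Q \ S. -/

import Mathlib

open Set

/-- A separator between `A` and `B` in a topological space: a closed set `L` whose
complement is the union of two disjoint open sets containing `A` and `B` respectively. -/
def IsSeparator {X : Type*} [TopologicalSpace X] (A B L : Set X) : Prop :=
  IsClosed L ∧ ∃ U V : Set X, IsOpen U ∧ IsOpen V ∧ Disjoint U V ∧
    A ⊆ U ∧ B ⊆ V ∧ Lᶜ = U ∪ V

/-- A family of pairs of sets is essential if every choice of separators has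
nonempty intersection. -/
def IsEssentialFamily {X : Type*} [TopologicalSpace X] {Γ : Type*}
    (A B : Γ → Set X) : Prop :=
  ∀ L : Γ → Set X, (∀ i, IsSeparator (A i) (B i) (L i)) → (⋂ i, L i).Nonempty

/-- A space is strongly infinite dimensional if it admits a countably infinite
essential family of pairs of disjoint closed subsets. -/
def StronglyInfiniteDimensional (X : Type*) [TopologicalSpace X] : Prop :=
  ∃ A B : ℕ → Set X,
    (∀ n, IsClosed (A n) ∧ IsClosed (B n) ∧ Disjoint (A n) (B n)) ∧
    IsEssentialFamily A B

/-- The Hilbert cube `Q = [-1,1]^ℕ`. -/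
abbrev HilbertCube : Type := ℕ → Set.Icc (-1 : ℝ) 1

/-- The negative face `W_i^- = {x ∈ Q : x_i = -1}`. -/
def negFace (i : ℕ) : Set HilbertCube := {x | (x i : ℝ) = -1}

/-- The positive face `W_i^+ = {x ∈ Q : x_i = 1}`. -/
def posFace (i : ℕ) : Set HilbertCube := {x | (x i : ℝ) = 1}


def kz {m : ℕ} (v : Fin (m+1) → ℤ) (σ : Equiv.Perm (Fin (m+1))) (k : ℕ) : Fin (m+1) → ℤ :=
  fun j => v j + if (σ.symm j : ℕ) < k then 1 else 0

def kF {m : ℕ} (b : Fin (m+1) → (Fin (m+1) → ℤ) → ZMod 2) (i : Fin (m+1)) (t : Fin (m+1) → ℕ)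
    (p : (Fin (m+1) → ℤ) × Equiv.Perm (Fin (m+1))) : ZMod 2 :=
  ∏ j, if j = i then b j (kz p.1 p.2 (t j)) else
    b j (kz p.1 p.2 (t j)) + b j (kz p.1 p.2 (t j + 1))

noncomputable def kbox (m : ℕ) (N : ℤ) : Finset ((Fin (m+1) → ℤ) × Equiv.Perm (Fin (m+1))) :=
  (Fintype.piFinset (fun _ => Finset.Ico (0:ℤ) N)) ×ˢ Finset.univ

lemma zmod2_add_self (a : ZMod 2) : a + a = 0 := CharTwo.add_self_eq_zero a

lemma kF_zero {m : ℕ} {N : ℤ} (b : Fin (m+1) → (Fin (m+1) → ℤ) → ZMod 2) (i : Fin (m+1))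
    (hlo : ∀ j z, z j ≤ 0 → b j z = 0)
    (hhi : ∀ j z, N ≤ z j → b j z = if j = i then 0 else 1)
    (t : Fin (m+1) → ℕ) (p) (hp : p ∉ kbox m N) : kF b i t p = 0 := by
  have : ∃ j, p.1 j < 0 ∨ N ≤ p.1 j := by
    by_contra! h
    exact hp (by simp [kbox, Fintype.mem_piFinset]; exact h)
  obtain ⟨j, hj⟩ := this
  unfold kF
  apply Finset.prod_eq_zero (Finset.mem_univ j)
  have key : ∀ k, (p.1 j < 0 → b j (kz p.1 p.2 k) = 0) ∧
      (N ≤ p.1 j → b j (kz p.1 p.2 k) = if j = i then 0 else 1) := by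
    intro k
    constructor
    · intro h; apply hlo; unfold kz; split_ifs <;> omega
    · intro h; apply hhi; unfold kz; split_ifs <;> omega
  rcases hj with hj | hj
  · simp [(key _).1 hj]
  · simp only [(key _).2 hj]
    split_ifs <;> simp [zmod2_add_self]

lemma kz_swap {m : ℕ} (v : Fin (m+1) → ℤ) (σ : Equiv.Perm (Fin (m+1))) (p : ℕ) (hp : p + 1 < m + 1)
    (k : ℕ) (hk : k ≠ p + 1) :
    kz v (σ * Equiv.swap ⟨p, by omega⟩ ⟨p+1, hp⟩) k = kz v σ k := by
  ext j
  unfold kz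
  congr 1
  have : (σ * Equiv.swap (⟨p, by omega⟩ : Fin (m+1)) ⟨p+1, hp⟩).symm j
      = Equiv.swap (⟨p, by omega⟩ : Fin (m+1)) ⟨p+1, hp⟩ (σ.symm j) := by
    rw [Equiv.symm_apply_eq]; simp
  rw [this]
  generalize σ.symm j = q
  rw [Equiv.swap_apply_def]
  have e1 : ((q : ℕ) < k ↔ ((if q = ⟨p, by omega⟩ then ⟨p+1, hp⟩ else if q = ⟨p+1, hp⟩ then ⟨p, by omega⟩ else q : Fin (m+1)) : ℕ) < k) := by
    split_ifs with h1 h2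
    · subst h1; simp; omega
    · subst h2; simp; omega
    · rfl
  simp only [← e1]

/-- sums of things independent of vertex p+1 vanish -/
lemma sum_swap {m : ℕ} (N : ℤ) (p : ℕ) (hp : p + 1 < m + 1)
    (f : (Fin (m+1) → ℤ) × Equiv.Perm (Fin (m+1)) → ZMod 2)
    (hf : ∀ v σ, f (v, σ * Equiv.swap ⟨p, by omega⟩ ⟨p+1, hp⟩) = f (v, σ)) :
    ∑ x ∈ kbox m N, f x = 0 := by
  refine Finset.sum_involution (fun x _ => (x.1, x.2 * Equiv.swap ⟨p, by omega⟩ ⟨p+1, hp⟩)) ?_ ?_ ?_ ?_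
  · rintro ⟨v, σ⟩ -
    rw [hf]; exact zmod2_add_self _
  · rintro ⟨v, σ⟩ - - h
    have h2 : σ * Equiv.swap (⟨p, by omega⟩ : Fin (m+1)) ⟨p+1, hp⟩ = σ := congrArg Prod.snd h
    have h3 : Equiv.swap (⟨p, by omega⟩ : Fin (m+1)) ⟨p+1, hp⟩ = 1 := mul_eq_left.mp h2
    rw [Equiv.swap_eq_one_iff] at h3
    simp at h3
  · rintro ⟨v, σ⟩ h
    simpa [kbox] using h
  · rintro ⟨v, σ⟩ -
    simp [mul_assoc]

lemma kF_step {m : ℕ} (N : ℤ) (b : Fin (m+1) → (Fin (m+1) → ℤ) → ZMod 2) (i : Fin (m+1))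
    (t t' : Fin (m+1) → ℕ) (p : ℕ) (hp : p + 1 < m + 1) (j0 : Fin (m+1)) (hj0 : j0 ≠ i)
    (h0 : t j0 = p) (h0' : t' j0 = p + 1) (htt : ∀ j, j ≠ j0 → t j = t' j)
    (ht : ∀ j, j ≠ j0 → j ≠ i → t j ≠ p ∧ t j ≠ p + 1) (hti : t i ≠ p + 1) :
    ∑ x ∈ kbox m N, kF b i t x = ∑ x ∈ kbox m N, kF b i t' x := by
  rw [← CharTwo.add_eq_zero, ← Finset.sum_add_distrib]
  have : ∀ x, kF b i t x + kF b i t' x =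
      (b j0 (kz x.1 x.2 p) + b j0 (kz x.1 x.2 (p+2))) * ∏ j ∈ Finset.univ.erase j0,
        (if j = i then b j (kz x.1 x.2 (t j)) else
          b j (kz x.1 x.2 (t j)) + b j (kz x.1 x.2 (t j + 1))) := by
    intro x
    unfold kF
    rw [← Finset.mul_prod_erase _ _ (Finset.mem_univ j0), ← Finset.mul_prod_erase _ _ (Finset.mem_univ j0)]
    rw [Finset.prod_congr rfl (g := fun j => (if j = i then b j (kz x.1 x.2 (t j)) else
          b j (kz x.1 x.2 (t j)) + b j (kz x.1 x.2 (t j + 1)))) (s₁ := Finset.univ.erase j0) (f := fun j => (if j = i then b j (kz x.1 x.2 (t' j)) else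
          b j (kz x.1 x.2 (t' j)) + b j (kz x.1 x.2 (t' j + 1))))]
    · rw [← add_mul]
      congr 1
      simp only [hj0, if_false, h0, h0']
      have := zmod2_add_self (b j0 (kz x.1 x.2 (p+1)))
      linear_combination this
    · intro j hj
      simp only [htt j (Finset.ne_of_mem_erase hj)]
  simp only [this]
  apply sum_swap N p hp
  intro v σ
  simp only
  rw [kz_swap v σ p hp p (by omega), kz_swap v σ p hp (p+2) (by omega)]
  congr 1
  apply Finset.prod_congr rfl
  intro j hj
  have hj := Finset.ne_of_mem_erase hj
  split_ifs with h
  · subst h; rw [kz_swap v σ p hp _ hti]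
  · have := ht j hj h
    rw [kz_swap v σ p hp _ this.2, kz_swap v σ p hp _ (by omega)]

def kshift (m : ℕ) : ((Fin (m+1) → ℤ) × Equiv.Perm (Fin (m+1))) ≃ ((Fin (m+1) → ℤ) × Equiv.Perm (Fin (m+1))) where
  toFun x := (x.1 + Pi.single (x.2 0) 1, x.2 * finRotate (m+1))
  invFun x := (x.1 - Pi.single ((x.2 * (finRotate (m+1))⁻¹) 0) 1, x.2 * (finRotate (m+1))⁻¹)
  left_inv x := by ext <;> simp [mul_assoc]
  right_inv x := by ext <;> simp [mul_assoc]

lemma kz_shift {m : ℕ} (x : (Fin (m+1) → ℤ) × Equiv.Perm (Fin (m+1))) (p : ℕ) (hp : p ≤ m) :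
    kz (kshift m x).1 (kshift m x).2 p = kz x.1 x.2 (p+1) := by
  obtain ⟨v, σ⟩ := x
  ext j
  obtain ⟨q, rfl⟩ := σ.surjective j
  have h1 : (σ * finRotate (m+1)).symm (σ q) = (finRotate (m+1)).symm q := by
    rw [Equiv.symm_apply_eq]; simp
  simp only [kz, kshift, Equiv.coe_fn_mk, h1, Pi.add_apply, Equiv.symm_apply_apply]
  rw [add_assoc]
  congr 1
  refine Fin.cases ?_ (fun q => ?_) q
  · have : (finRotate (m+1)).symm 0 = Fin.last m := by
      rw [Equiv.symm_apply_eq]; simp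
    rw [this]; simp; omega
  · have : (finRotate (m+1)).symm q.succ = q.castSucc := by
      rw [Equiv.symm_apply_eq]; simp
    rw [this]
    have : σ q.succ ≠ σ 0 := by simp
    simp [this]

lemma kF_shift {m : ℕ} (N : ℤ) (b : Fin (m+1) → (Fin (m+1) → ℤ) → ZMod 2) (i : Fin (m+1))
    (hlo : ∀ j z, z j ≤ 0 → b j z = 0)
    (hhi : ∀ j z, N ≤ z j → b j z = if j = i then 0 else 1)
    (t : Fin (m+1) → ℕ) (ht : ∀ j, j ≠ i → t j + 1 ≤ m) (hti : t i ≤ m) :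
    ∑ x ∈ kbox m N, kF b i t x = ∑ x ∈ kbox m N, kF b i (fun j => t j + 1) x := by
  have key : ∀ t, ∑ x ∈ kbox m N, kF b i t x = ∑ᶠ x, kF b i t x := by
    intro t
    symm
    apply finsum_eq_sum_of_support_subset
    intro x hx
    by_contra h
    exact hx (kF_zero b i hlo hhi t x h)
  rw [key, key, ← finsum_comp_equiv (kshift m)]
  apply finsum_congr
  intro x
  unfold kF
  apply Finset.prod_congr rfl
  intro j _
  split_ifs with h
  · subst h; rw [kz_shift x _ hti]
  · rw [kz_shift x _ (by have := ht j h; omega), kz_shift x _ (ht j h)]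

lemma kF_main {m : ℕ} (N : ℤ) (b : Fin (m+1) → (Fin (m+1) → ℤ) → ZMod 2) (i : Fin (m+1))
    (hlo : ∀ j z, z j ≤ 0 → b j z = 0)
    (hhi : ∀ j z, N ≤ z j → b j z = if j = i then 0 else 1) :
    ∑ x ∈ kbox m N, kF b i (fun j => if j = i then (j:ℕ) + 1 else j) x =
      ∑ x ∈ kbox m N, kF b i (fun j => j) x := by
  have hi := i.2
  have hP : ∀ k : ℕ, k ≤ i →
      ∑ x ∈ kbox m N, kF b i (fun j => if (j:ℕ) < k then (j:ℕ) else if j ≤ i then j + 1 else j) x =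
      ∑ x ∈ kbox m N, kF b i (fun j => if j ≤ i then (j:ℕ) + 1 else j) x := by
    intro k
    induction k with
    | zero => intro _; simp
    | succ k ih =>
      intro hk
      rw [← ih (by omega)]
      apply kF_step N b i _ _ k (by omega) ⟨k, by omega⟩
      · intro h; have h := congrArg Fin.val h; simp only at h; omega
      · simp
      · simp [Fin.le_def]; omega
      · intro j hj
        have : (j:ℕ) ≠ k := fun h => hj (Fin.ext h)
        simp only [Fin.le_def]
        grind
      · intro j hj hji
        have : (j:ℕ) ≠ k := fun h => hj (Fin.ext h)
        have : (j:ℕ) ≠ i := fun h => hji (Fin.ext h)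
        simp only [Fin.le_def]
        grind
      · simp only [Fin.le_def]
        grind
  have hQ : ∀ k : ℕ, i ≤ k → k ≤ m →
      ∑ x ∈ kbox m N, kF b i (fun j => if (j:ℕ) ≤ i then (j:ℕ) else if j ≤ k then j - 1 else j) x =
      ∑ x ∈ kbox m N, kF b i (fun j => j) x := by
    intro k hk
    induction k, hk using Nat.le_induction with
    | base => intro _; congr! 3 with x hx j; grind
    | succ k hk ih =>
      intro hkm
      rw [← ih (by omega)]
      apply kF_step N b i _ _ k (by omega) ⟨k+1, by omega⟩
      · intro h; have h := congrArg Fin.val h; simp only at h; omega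
      · grind
      · grind
      · intro j hj
        have : (j:ℕ) ≠ k+1 := fun h => hj (Fin.ext h)
        grind
      · intro j hj hji
        have : (j:ℕ) ≠ k+1 := fun h => hj (Fin.ext h)
        have : (j:ℕ) ≠ i := fun h => hji (Fin.ext h)
        grind
      · grind
  have h1 := hP i le_rfl
  have h2 := hQ m (by omega) le_rfl
  rw [kF_shift N b i hlo hhi] at h2
  · rw [← h2]
    convert h1 using 4
    · rename_i x hx j
      simp only [Fin.le_def, Fin.ext_iff]; grind
    · rename_i x hx j
      simp only [Fin.le_def]; grind
  · intro j hji
    have : (j:ℕ) ≠ i := fun h => hji (Fin.ext h)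
    grind
  · grind

def kD {m : ℕ} (b : Fin (m+1) → (Fin (m+1) → ℤ) → ZMod 2)
    (p : (Fin (m+1) → ℤ) × Equiv.Perm (Fin (m+1))) : ZMod 2 :=
  ∏ j, (b j (kz p.1 p.2 j) + b j (kz p.1 p.2 (j + 1)))

lemma kD_change {m : ℕ} (N : ℤ) (b b' : Fin (m+1) → (Fin (m+1) → ℤ) → ZMod 2) (i : Fin (m+1))
    (hbb : ∀ j, j ≠ i → b j = b' j)
    (hlo : ∀ j z, z j ≤ 0 → b j z = 0) (hhi : ∀ j z, N ≤ z j → b j z = 1)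
    (hlo' : ∀ j z, z j ≤ 0 → b' j z = 0) (hhi' : ∀ j z, N ≤ z j → b' j z = 1) :
    ∑ x ∈ kbox m N, kD b x = ∑ x ∈ kbox m N, kD b' x := by
  have := kF_main N (Function.update b i (b i + b' i)) i
    (by
      intro j z hz
      by_cases h : j = i
      · subst h; simp [hlo _ _ hz, hlo' _ _ hz]
      · simp [h, hlo _ _ hz])
    (by
      intro j z hz
      by_cases h : j = i
      · subst h; simp [hhi _ _ hz, hhi' _ _ hz, zmod2_add_self]
      · simp [h, hhi _ _ hz])
  rw [← CharTwo.add_eq_zero, ← Finset.sum_add_distrib] at this ⊢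
  rw [← this]
  apply Finset.sum_congr rfl
  intro x _
  unfold kD kF
  simp only [← Finset.mul_prod_erase _ _ (Finset.mem_univ i)]
  have e1 : ∀ (g1 g2 g3 g4 : Fin (m+1) → ZMod 2) (a1 a2 a3 a4 : ZMod 2), (∀ j, j ≠ i → g1 j = g2 j) →
    (∀ j, j ≠ i → g1 j = g3 j) → (∀ j, j ≠ i → g1 j = g4 j) → a1 + a2 = a3 + a4 →
    a1 * ∏ j ∈ Finset.univ.erase i, g1 j + a2 * ∏ j ∈ Finset.univ.erase i, g2 j
     = a3 * ∏ j ∈ Finset.univ.erase i, g3 j + a4 * ∏ j ∈ Finset.univ.erase i, g4 j := by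
    intro g1 g2 g3 g4 a1 a2 a3 a4 h2 h3 h4 ha
    rw [← Finset.prod_congr rfl (fun j hj => h2 j (Finset.ne_of_mem_erase hj)),
      ← Finset.prod_congr rfl (fun j hj => h3 j (Finset.ne_of_mem_erase hj)),
      ← Finset.prod_congr rfl (fun j hj => h4 j (Finset.ne_of_mem_erase hj)), ← add_mul, ha, add_mul]
  apply e1
  · intro j hj; simp [hbb j hj]
  · intro j hj; simp [hj]
  · intro j hj; simp [hj]
  · simp; ring

lemma kD_std {m : ℕ} (N : ℤ) (hN : 0 < N) :
    ∑ x ∈ kbox m N, kD (fun j z => if 0 < z j then 1 else 0) x = 1 := by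
  rw [Finset.sum_eq_single (0, 1)]
  · unfold kD kz
    apply Finset.prod_eq_one
    intro j _
    have : (Equiv.symm (1 : Equiv.Perm (Fin (m+1)))) j = j := rfl
    simp [this]
  · rintro ⟨v, σ⟩ - h
    by_contra h0
    apply h
    rw [← ne_eq] at h0
    unfold kD at h0
    rw [Finset.prod_ne_zero_iff] at h0
    have key : ∀ j, σ.symm j = j ∧ v j = 0 := by
      intro j
      have := h0 j (Finset.mem_univ j)
      simp only [kz] at this
      rw [Fin.ext_iff]
      split_ifs at this <;> first | omega | (exfalso; revert this; decide)
    have h1 : σ = 1 := by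
      ext j
      have := (key (σ j)).1
      simp at this
      simp [← this]
    rw [h1]
    simp
    ext j; exact (key j).2
  · intro h
    exact absurd (by simp [kbox, hN]) h

theorem discrete_miranda {m : ℕ} (N : ℤ) (hN : 0 < N) (b : Fin (m+1) → (Fin (m+1) → ℤ) → ZMod 2)
    (hlo : ∀ j z, z j ≤ 0 → b j z = 0) (hhi : ∀ j z, N ≤ z j → b j z = 1) :
    ∃ v : Fin (m+1) → ℤ, ∀ j, ∃ z w : Fin (m+1) → ℤ, (∀ l, v l ≤ z l ∧ z l ≤ v l + 1) ∧
      (∀ l, v l ≤ w l ∧ w l ≤ v l + 1) ∧ b j z = 0 ∧ b j w = 1 := by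
  have key : ∀ r : ℕ, ∑ x ∈ kbox m N, kD (fun j z => if (j:ℕ) < r then (if 0 < z j then 1 else 0) else b j z) x
      = ∑ x ∈ kbox m N, kD b x := by
    intro r
    induction r with
    | zero => simp
    | succ r ih =>
      rw [← ih]
      by_cases hr : r < m + 1
      · apply kD_change N _ _ ⟨r, hr⟩
        · intro j hj
          have : (j:ℕ) ≠ r := fun h => hj (Fin.ext h)
          ext z; grind
        all_goals
          intro j z hz
          grind
      · congr! 3 with x hx j z
        have := j.2
        grind
  have h1 : ∑ x ∈ kbox m N, kD b x = 1 := by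
    rw [← key (m+1)]
    refine Eq.trans ?_ (kD_std (m := m) N hN)
    congr! 3 with x hx j z
    have := j.2
    grind
  have : ∃ x ∈ kbox m N, kD b x ≠ 0 := by
    by_contra! h
    rw [Finset.sum_eq_zero h] at h1
    exact absurd h1 (by decide)
  obtain ⟨⟨v, σ⟩, -, hx⟩ := this
  unfold kD at hx
  rw [Finset.prod_ne_zero_iff] at hx
  have hz : ∀ k l, v l ≤ kz v σ k l ∧ kz v σ k l ≤ v l + 1 := by
    intro k l; unfold kz; split_ifs <;> omega
  refine ⟨v, fun j => ?_⟩
  have hj := hx j (Finset.mem_univ j)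
  have d : ∀ a c : ZMod 2, a + c ≠ 0 → (a = 0 ∧ c = 1) ∨ (c = 0 ∧ a = 1) := by decide
  rcases d _ _ hj with h | h
  · exact ⟨_, _, hz _, hz _, h.1, h.2⟩
  · exact ⟨_, _, hz _, hz _, h.1, h.2⟩

noncomputable def gridPt (m N : ℕ) (z : Fin (m+1) → ℤ) : HilbertCube := fun l =>
  if h : l < m + 1 then Set.projIcc (-1 : ℝ) 1 (by norm_num) (-1 + 2 * (z ⟨l, h⟩ : ℝ) / (N + 1)) else
    ⟨0, by norm_num⟩

lemma gridPt_dist (m N : ℕ) (v z : Fin (m+1) → ℤ) (h : ∀ l, v l ≤ z l ∧ z l ≤ v l + 1) (l : ℕ) :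
    |(gridPt m N z l : ℝ) - gridPt m N v l| ≤ 2 / (N + 1) := by
  unfold gridPt
  have hN : (0:ℝ) < N + 1 := by positivity
  split_ifs with hl
  · refine (Set.abs_projIcc_sub_projIcc _).trans ?_
    have h1 : (v ⟨l, hl⟩ : ℝ) ≤ z ⟨l, hl⟩ := by exact_mod_cast (h ⟨l, hl⟩).1
    have h2 : (z ⟨l, hl⟩ : ℝ) ≤ v ⟨l, hl⟩ + 1 := by exact_mod_cast (h ⟨l, hl⟩).2
    have e : (-1 + 2 * (z ⟨l, hl⟩ : ℝ) / (N + 1)) - (-1 + 2 * (v ⟨l, hl⟩ : ℝ) / (N + 1))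
      = 2 * ((z ⟨l, hl⟩ : ℝ) - v ⟨l, hl⟩) / (N + 1) := by field_simp; ring
    rw [e, abs_of_nonneg (by apply div_nonneg <;> linarith)]
    gcongr
    linarith
  · simp; positivity

lemma tendsto_of_close (q p : ℕ → HilbertCube) (a : HilbertCube) (φ : ℕ → ℕ) (hφ : StrictMono φ)
    (hq : Filter.Tendsto (q ∘ φ) Filter.atTop (nhds a))
    (h : ∀ N l, |(p N l : ℝ) - q N l| ≤ 2 / (N + 1)) :
    Filter.Tendsto (p ∘ φ) Filter.atTop (nhds a) := by
  rw [tendsto_pi_nhds] at hq ⊢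
  intro l
  have hql := hq l
  rw [tendsto_subtype_rng] at hql ⊢
  have h0 : Filter.Tendsto (fun N : ℕ => (2:ℝ) / (N + 1)) Filter.atTop (nhds 0) := by
    have := (tendsto_one_div_add_atTop_nhds_zero_nat (𝕜 := ℝ)).const_mul 2
    simpa [mul_one_div, div_eq_mul_inv] using this
  have h1 : Filter.Tendsto (fun N => ((p (φ N) l : ℝ) - q (φ N) l)) Filter.atTop (nhds 0) :=
    squeeze_zero_norm (fun N => h (φ N) l) (h0.comp hφ.tendsto_atTop)
  have := h1.add hql
  simpa using this

theorem faces_essential (U V : ℕ → Set HilbertCube) (hU : ∀ i, IsOpen (U i)) (hV : ∀ i, IsOpen (V i))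
    (hUV : ∀ i, Disjoint (U i) (V i)) (hn : ∀ i, negFace i ⊆ U i) (hp : ∀ i, posFace i ⊆ V i) :
    (⋂ i, (U i ∪ V i)ᶜ).Nonempty := by
  classical
  have fin : ∀ m : ℕ, (⋂ i ∈ Finset.range (m+1), (U i ∪ V i)ᶜ).Nonempty := by
    intro m
    have step : ∀ N : ℕ, ∃ v : Fin (m+1) → ℤ, ∀ j : Fin (m+1), ∃ z w : Fin (m+1) → ℤ,
        (∀ l, v l ≤ z l ∧ z l ≤ v l + 1) ∧ (∀ l, v l ≤ w l ∧ w l ≤ v l + 1) ∧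
        gridPt m N z ∉ V j ∧ gridPt m N w ∈ V j := by
      intro N
      have hN : (0:ℝ) < N + 1 := by positivity
      obtain ⟨v, hv⟩ := discrete_miranda (m := m) ((N : ℤ) + 1) (by positivity)
        (fun j z => if gridPt m N z ∈ V j then 1 else 0)
        (by
          intro j z hz
          have : gridPt m N z ∈ negFace j := by
            have hz' : (z j : ℝ) ≤ 0 := by exact_mod_cast hz
            simp only [negFace, gridPt, mem_ofPred_eq, j.2, dif_pos]
            rw [Set.projIcc_of_le_left]
            have : 2 * (z j : ℝ) / (N + 1) ≤ 0 := by
              apply div_nonpos_of_nonpos_of_nonneg <;> linarith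
            linarith
          have h2 : gridPt m N z ∉ V j := fun h => (hUV j).le_bot ⟨hn j this, h⟩
          simp [h2])
        (by
          intro j z hz
          have : gridPt m N z ∈ posFace j := by
            have hz' : (N : ℝ) + 1 ≤ (z j : ℝ) := by exact_mod_cast hz
            simp only [posFace, gridPt, mem_ofPred_eq, j.2, dif_pos]
            rw [Set.projIcc_of_right_le]
            have : 2 ≤ 2 * (z j : ℝ) / (N + 1) := by
              rw [le_div_iff₀ hN]; linarith
            linarith
          simp [hp j this])
      refine ⟨v, fun j => ?_⟩
      obtain ⟨z, w, hz, hw, h1, h2⟩ := hv j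
      refine ⟨z, w, hz, hw, ?_, ?_⟩
      · intro h; simp [h] at h1
      · by_contra h; simp [h] at h2
    choose v z w hz hw hzV hwV using step
    obtain ⟨a, φ, hφ, ha⟩ := CompactSpace.tendsto_subseq (fun N => gridPt m N (v N))
    refine ⟨a, ?_⟩
    simp only [mem_iInter, Finset.mem_range]
    intro i hi hmem
    rcases hmem with h | h
    · have t := tendsto_of_close _ (fun N => gridPt m N (w N ⟨i, hi⟩)) a φ hφ ha
        (fun N l => gridPt_dist m N _ _ (hw N _) l)
      obtain ⟨N, hN⟩ := (t.eventually ((hU i).mem_nhds h)).exists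
      exact (hUV i).le_bot ⟨hN, hwV (φ N) ⟨i, hi⟩⟩
    · have t := tendsto_of_close _ (fun N => gridPt m N (z N ⟨i, hi⟩)) a φ hφ ha
        (fun N l => gridPt_dist m N _ _ (hz N _) l)
      obtain ⟨N, hN⟩ := (t.eventually ((hV i).mem_nhds h)).exists
      exact hzV (φ N) ⟨i, hi⟩ hN
  have cl : ∀ m : ℕ, IsClosed (⋂ i ∈ Finset.range (m+1), (U i ∪ V i)ᶜ) := fun m =>
    isClosed_biInter fun i _ => ((hU i).union (hV i)).isClosed_compl
  obtain ⟨a, ha⟩ := IsCompact.nonempty_iInter_of_sequence_nonempty_isCompact_isClosed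
    (fun m : ℕ => ⋂ i ∈ Finset.range (m+1), (U i ∪ V i)ᶜ)
    (fun m => biInter_subset_biInter_left (fun i hi => by
      simp only [Finset.coe_range, Finset.mem_range, mem_Iio, Finset.mem_coe] at hi ⊢; 
      have : i ∈ Finset.range (m+1) := by simpa using hi
      simp at this ⊢; omega)) fin (cl 0).isCompact cl
  refine ⟨a, ?_⟩
  simp only [mem_iInter] at ha ⊢
  exact fun i => ha i i (by simp)

/-- If all separators for i ≥ 1 are given, their intersection contains a continuum
joining the two opposite 0-faces. -/
theorem exists_continuum (U V : ℕ → Set HilbertCube) (hU : ∀ i, IsOpen (U i)) (hV : ∀ i, IsOpen (V i))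
    (hUV : ∀ i, Disjoint (U i) (V i)) (hn : ∀ i, negFace (i+1) ⊆ U i)
    (hp : ∀ i, posFace (i+1) ⊆ V i) :
    ∃ C ⊆ ⋂ i, (U i ∪ V i)ᶜ, IsCompact C ∧ IsConnected C ∧ (C ∩ negFace 0).Nonempty ∧
      (C ∩ posFace 0).Nonempty := by
  set K := ⋂ i, (U i ∪ V i)ᶜ with hK
  have hKc : IsClosed K := isClosed_iInter fun i => ((hU i).union (hV i)).isClosed_compl
  have : CompactSpace K := isCompact_iff_compactSpace.mp hKc.isCompact
  have cn : IsClosed (negFace 0) := isClosed_eq (by fun_prop) (by fun_prop)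
  have cp : IsClosed (posFace 0) := isClosed_eq (by fun_prop) (by fun_prop)
  have dnp : Disjoint (negFace 0) (posFace 0) := by
    rw [Set.disjoint_left]; intro z h1 h2
    simp only [negFace, posFace, mem_ofPred_eq] at h1 h2
    rw [h1] at h2; norm_num at h2
  by_contra hC
  have hcomp : ∀ a : K, (a : HilbertCube) ∈ negFace 0 → ∃ Z : Set K, IsClopen Z ∧ a ∈ Z ∧
      Disjoint Z (Subtype.val ⁻¹' posFace 0) := by
    intro a ha
    by_contra! hZ
    apply hC
    refine ⟨Subtype.val '' connectedComponent a, by rintro _ ⟨y, -, rfl⟩; exact y.2,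
      isClosed_connectedComponent.isCompact.image continuous_subtype_val,
      isConnected_connectedComponent.image _ continuous_subtype_val.continuousOn,
      ⟨a, ⟨a, mem_connectedComponent, rfl⟩, ha⟩, ?_⟩
    have : (Subtype.val ⁻¹' posFace 0 ∩ ⋂ s : { s : Set K // IsClopen s ∧ a ∈ s }, (s : Set K)).Nonempty := by
      have hne : Nonempty { s : Set K // IsClopen s ∧ a ∈ s } := ⟨⟨univ, isClopen_univ, trivial⟩⟩
      rw [inter_iInter]
      apply IsCompact.nonempty_iInter_of_directed_nonempty_isCompact_isClosed
      · intro s t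
        refine ⟨⟨s ∩ t, s.2.1.inter t.2.1, s.2.2, t.2.2⟩, ?_, ?_⟩
        · exact fun y hy => ⟨hy.1, hy.2.1⟩
        · exact fun y hy => ⟨hy.1, hy.2.2⟩
      · intro s
        rw [inter_comm]
        exact Set.not_disjoint_iff_nonempty_inter.mp (hZ s s.2.1 s.2.2)
      · exact fun s => ((cp.preimage continuous_subtype_val).inter s.2.1.1).isCompact
      · exact fun s => ((cp.preimage continuous_subtype_val).inter s.2.1.1)
    rw [← connectedComponent_eq_iInter_isClopen] at this
    obtain ⟨y, hy1, hy2⟩ := this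
    exact ⟨y, ⟨y, hy2, rfl⟩, hy1⟩
  have hP : ∃ P : Set K, IsClopen P ∧ Subtype.val ⁻¹' negFace 0 ⊆ P ∧
      Disjoint P (Subtype.val ⁻¹' posFace 0) := by
    refine (cn.preimage continuous_subtype_val : IsClosed (Subtype.val ⁻¹' negFace 0 : Set K)).isCompact.induction_on
      (p := fun s => ∃ P : Set K, IsClopen P ∧ s ⊆ P ∧ Disjoint P (Subtype.val ⁻¹' posFace 0))
      ?_ ?_ ?_ ?_
    · exact ⟨∅, isClopen_empty, by simp, by simp⟩
    · rintro s t hst ⟨P, h1, h2, h3⟩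
      exact ⟨P, h1, hst.trans h2, h3⟩
    · rintro s t ⟨P, h1, h2, h3⟩ ⟨P', h1', h2', h3'⟩
      exact ⟨P ∪ P', h1.union h1', union_subset_union h2 h2', h3.union_left h3'⟩
    · intro a ha
      obtain ⟨Z, h1, h2, h3⟩ := hcomp a ha
      exact ⟨Z, mem_nhdsWithin_of_mem_nhds (h1.2.mem_nhds h2), Z, h1, Subset.rfl, h3⟩
  obtain ⟨P, hPc, hPn, hPp⟩ := hP
  have c1 : IsClosed (Subtype.val '' P ∪ negFace 0) :=
    (hKc.isClosedEmbedding_subtypeVal.isClosedMap _ hPc.1).union cn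
  have c2 : IsClosed (Subtype.val '' Pᶜ ∪ posFace 0) :=
    (hKc.isClosedEmbedding_subtypeVal.isClosedMap _ hPc.2.isClosed_compl).union cp
  have dd : Disjoint (Subtype.val '' P ∪ negFace 0) (Subtype.val '' Pᶜ ∪ posFace 0) := by
    rw [Set.disjoint_left]
    rintro z (⟨y, hy, rfl⟩ | h1) (⟨y', hy', h⟩ | h2)
    · exact hy' (by rwa [Subtype.ext h])
    · exact hPp.le_bot ⟨hy, h2⟩
    · subst h; exact hy' (hPn h1)
    · exact dnp.le_bot ⟨h1, h2⟩
  obtain ⟨U0, V0, hU0, hV0, h1, h2, h3⟩ := normal_separation c1 c2 dd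
  obtain ⟨a, ha⟩ := faces_essential (fun i => Nat.casesOn i U0 U) (fun i => Nat.casesOn i V0 V)
    (by rintro (_ | i); exacts [hU0, hU i]) (by rintro (_ | i); exacts [hV0, hV i])
    (by rintro (_ | i); exacts [h3, hUV i])
    (by rintro (_ | i); exacts [subset_union_right.trans h1, hn i])
    (by rintro (_ | i); exacts [subset_union_right.trans h2, hp i])
  rw [mem_iInter] at ha
  have haK : a ∈ K := by rw [hK, mem_iInter]; exact fun i => ha (i+1)
  have ha0 : a ∉ U0 ∪ V0 := ha 0
  apply ha0
  by_cases haP : (⟨a, haK⟩ : K) ∈ P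
  · exact Or.inl (h1 (Or.inl ⟨_, haP, rfl⟩))
  · exact Or.inr (h2 (Or.inl ⟨_, haP, rfl⟩))

lemma strong_of_closedEmbedding {X Y : Type*} [TopologicalSpace X] [TopologicalSpace Y] (g : X → Y)
    (hg : Topology.IsClosedEmbedding g) (h : StronglyInfiniteDimensional X) :
    StronglyInfiniteDimensional Y := by
  obtain ⟨A, B, hAB, hE⟩ := h
  refine ⟨fun n => g '' A n, fun n => g '' B n, fun n => ⟨hg.isClosedMap _ (hAB n).1,
    hg.isClosedMap _ (hAB n).2.1, (Set.disjoint_image_iff hg.injective).2 (hAB n).2.2⟩, ?_⟩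
  intro L hL
  obtain ⟨a, ha⟩ := hE (fun n => g ⁻¹' L n) (by
    intro n
    obtain ⟨hc, U, V, hU, hV, hd, h1, h2, h3⟩ := hL n
    refine ⟨hc.preimage hg.continuous, g ⁻¹' U, g ⁻¹' V, hU.preimage hg.continuous,
      hV.preimage hg.continuous, hd.preimage g, image_subset_iff.1 h1, image_subset_iff.1 h2, ?_⟩
    rw [← preimage_compl, h3, preimage_union])
  refine ⟨g a, ?_⟩
  simpa [mem_iInter] using ha

lemma extend_sep (T : Set HilbertCube) (i : ℕ) (U V : Set T) (hU : IsOpen U) (hV : IsOpen V)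
    (hd : Disjoint U V) (hA : {z : T | ((z : HilbertCube) i : ℝ) ≤ -1/2} ⊆ U)
    (hB : {z : T | 1/2 ≤ ((z : HilbertCube) i : ℝ)} ⊆ V) :
    ∃ U' V' : Set HilbertCube, IsOpen U' ∧ IsOpen V' ∧ Disjoint U' V' ∧ negFace i ⊆ U' ∧
      posFace i ⊆ V' ∧ Subtype.val '' U ⊆ U' ∧ Subtype.val '' V ⊆ V' := by
  have gen : ∀ (U V : Set T) (F G : Set HilbertCube), IsOpen V → Disjoint U V → IsClosed F → Disjoint F G →
      (∃ W, IsOpen W ∧ G ⊆ W ∧ ∀ z : T, z.1 ∈ W → z ∈ V) →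
      (∃ W, IsOpen W ∧ F ⊆ W ∧ ∀ z : T, z.1 ∈ W → z ∈ U) →
      Disjoint (closure (Subtype.val '' U ∪ F)) (Subtype.val '' V ∪ G) := by
    rintro U V F G hV hd hF hFG ⟨W, hW, hGW, hWV⟩ ⟨W', hW', hFW, hWU⟩
    rw [closure_union, hF.closure_eq, Set.disjoint_left]
    rintro z (hz | hz) (⟨y, hy, rfl⟩ | hG)
    · obtain ⟨V1, hV1, rfl⟩ := isOpen_induced_iff.1 hV
      obtain ⟨_, h1, y', h2, rfl⟩ := mem_closure_iff.1 hz V1 hV1 hy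
      exact hd.le_bot ⟨h2, h1⟩
    · obtain ⟨_, h1, y', h2, rfl⟩ := mem_closure_iff.1 hz W hW (hGW hG)
      exact hd.le_bot ⟨h2, hWV _ h1⟩
    · exact hd.le_bot ⟨hWU _ (hFW hz), hy⟩
    · exact hFG.le_bot ⟨hz, hG⟩
  have cn : IsClosed (negFace i) := isClosed_eq (by fun_prop) (by fun_prop)
  have cp : IsClosed (posFace i) := isClosed_eq (by fun_prop) (by fun_prop)
  have dnp : Disjoint (negFace i) (posFace i) := by
    rw [Set.disjoint_left]; intro z h1 h2
    simp only [negFace, posFace, mem_ofPred_eq] at h1 h2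
    rw [h1] at h2; norm_num at h2
  have w1 : ∃ W, IsOpen W ∧ posFace i ⊆ W ∧ ∀ z : T, z.1 ∈ W → z ∈ V :=
    ⟨{z | (1/2 : ℝ) < z i}, isOpen_lt (by fun_prop) (by fun_prop),
      fun z hz => by simp only [posFace, mem_ofPred_eq] at hz ⊢; rw [hz]; norm_num,
      fun z hz => hB (by simp only [mem_ofPred_eq] at hz ⊢; exact le_of_lt hz)⟩
  have w2 : ∃ W, IsOpen W ∧ negFace i ⊆ W ∧ ∀ z : T, z.1 ∈ W → z ∈ U :=
    ⟨{z | (z i : ℝ) < -1/2}, isOpen_lt (by fun_prop) (by fun_prop),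
      fun z hz => by simp only [negFace, mem_ofPred_eq] at hz ⊢; rw [hz]; norm_num,
      fun z hz => hA (by simp only [mem_ofPred_eq] at hz ⊢; exact le_of_lt hz)⟩
  have d1 := gen U V _ _ hV hd cn dnp w1 w2
  have d2 := gen V U _ _ hU hd.symm cp dnp.symm w2 w1
  have := CompletelyNormalSpace.completely_normal d1 d2.symm
  rw [← separatedNhds_iff_disjoint] at this
  obtain ⟨U', V', hU', hV', h1, h2, h3⟩ := this
  exact ⟨U', V', hU', hV', h3, subset_union_right.trans h1, subset_union_right.trans h2,
    subset_union_left.trans h1, subset_union_left.trans h2⟩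

/-- A weakly infinite dimensional set misses a continuum joining opposite 0-faces. -/
theorem weak_miss (T : Set HilbertCube) (hT : ¬ StronglyInfiniteDimensional T) :
    ∃ C ⊆ Tᶜ, IsCompact C ∧ IsConnected C ∧ (C ∩ negFace 0).Nonempty ∧
      (C ∩ posFace 0).Nonempty := by
  have h : ¬ IsEssentialFamily (fun i : ℕ => {z : T | ((z : HilbertCube) (i+1) : ℝ) ≤ -1/2})
      (fun i : ℕ => {z : T | 1/2 ≤ ((z : HilbertCube) (i+1) : ℝ)}) := by
    intro h
    have hc : ∀ i : ℕ, Continuous fun z : T => ((z : HilbertCube) (i+1) : ℝ) := fun i =>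
      continuous_subtype_val.comp ((continuous_apply (i+1)).comp continuous_subtype_val)
    refine hT ⟨_, _, fun i => ⟨isClosed_le (hc i) continuous_const,
      isClosed_le continuous_const (hc i), ?_⟩, h⟩
    rw [Set.disjoint_left]; intro z h1 h2
    simp only [mem_ofPred_eq] at h1 h2
    linarith
  unfold IsEssentialFamily at h
  push Not at h
  obtain ⟨L, hL, hE⟩ := h
  choose hLc U V hU hV hd hA hB hLU using hL
  choose U' V' hU' hV' hd' hn hp hUU hVV using fun i => extend_sep T (i+1) (U i) (V i) (hU i) (hV i) (hd i) (hA i) (hB i)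
  obtain ⟨C, hC, h1, h2, h3, h4⟩ := exists_continuum U' V' hU' hV' hd' hn hp
  refine ⟨C, ?_, h1, h2, h3, h4⟩
  intro z hz hzT
  have hzz := hC hz
  rw [mem_iInter] at hzz
  have : (⟨z, hzT⟩ : T) ∈ ⋂ i, L i := by
    rw [mem_iInter]
    intro i
    by_contra hn
    have : (⟨z, hzT⟩ : T) ∈ (L i)ᶜ := hn
    rw [hLU] at this
    rcases this with h | h
    · exact hzz i (Or.inl (hUU i ⟨_, h, rfl⟩))
    · exact hzz i (Or.inr (hVV i ⟨_, h, rfl⟩))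
  rw [hE] at this
  exact this

/-- the suspension-like map -/
noncomputable def suspS (z : HilbertCube) : ℝ := ((z 0 : ℝ) + 1) / 2

noncomputable def suspR (x y : HilbertCube) (k : ℕ) (z : HilbertCube) (j : ℕ) : ℝ :=
  if j = k then (1 - suspS z) * x j + suspS z * y j else
    (1 - suspS z * (1 - suspS z)) * ((1 - suspS z) * x j + suspS z * y j) +
      suspS z * (1 - suspS z) * z (Equiv.swap 0 k j)

lemma suspS_mem (z : HilbertCube) : 0 ≤ suspS z ∧ suspS z ≤ 1 := by
  have := (z 0).2.1; have := (z 0).2.2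
  unfold suspS; constructor <;> linarith

lemma comb_mem {s a b : ℝ} (hs : 0 ≤ s ∧ s ≤ 1) (ha : a ∈ Icc (-1:ℝ) 1) (hb : b ∈ Icc (-1:ℝ) 1) :
    (1 - s) * a + s * b ∈ Icc (-1:ℝ) 1 :=
  convex_Icc (-1:ℝ) 1 ha hb (by linarith [hs.2]) hs.1 (by ring)

lemma suspR_mem (x y : HilbertCube) (k : ℕ) (z : HilbertCube) (j : ℕ) :
    suspR x y k z j ∈ Icc (-1:ℝ) 1 := by
  have hs := suspS_mem z
  unfold suspR
  split_ifs
  · exact comb_mem hs (x j).2 (y j).2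
  · refine comb_mem ⟨mul_nonneg hs.1 (by linarith), ?_⟩ (comb_mem hs (x j).2 (y j).2) (z _).2
    nlinarith

noncomputable def susp (x y : HilbertCube) (k : ℕ) (z : HilbertCube) : HilbertCube :=
  fun j => ⟨suspR x y k z j, suspR_mem x y k z j⟩

lemma susp_continuous (x y : HilbertCube) (k : ℕ) : Continuous (susp x y k) := by
  have h0 : Continuous suspS := by unfold suspS; fun_prop
  refine continuous_pi fun j => Continuous.subtype_mk ?_ _
  unfold suspR
  split_ifs <;> fun_prop

lemma susp_neg (x y : HilbertCube) (k : ℕ) (z) (hz : z ∈ negFace 0) : susp x y k z = x := by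
  have : suspS z = 0 := by unfold suspS; rw [show (z 0 : ℝ) = -1 from hz]; norm_num
  funext j; apply Subtype.ext; simp [susp, suspR, this]

lemma susp_pos (x y : HilbertCube) (k : ℕ) (z) (hz : z ∈ posFace 0) : susp x y k z = y := by
  have : suspS z = 1 := by unfold suspS; rw [show (z 0 : ℝ) = 1 from hz]; norm_num
  funext j; apply Subtype.ext; simp [susp, suspR, this]

lemma susp_inj (x y : HilbertCube) (k : ℕ) (hk : x k ≠ y k) (z w : HilbertCube)
    (hn : z ∉ negFace 0) (hp : z ∉ posFace 0) (h : susp x y k z = susp x y k w) : z = w := by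
  have hR : ∀ j, suspR x y k z j = suspR x y k w j := fun j => congrArg Subtype.val (congrFun h j)
  have hk' : (y k : ℝ) - x k ≠ 0 := fun h => hk (Subtype.ext (by linarith))
  have hs : suspS z = suspS w := by
    have := hR k
    simp only [suspR, if_true] at this
    have h2 : (suspS z - suspS w) * ((y k : ℝ) - x k) = 0 := by linear_combination this
    rcases mul_eq_zero.1 h2 with h | h
    · linarith
    · exact absurd h hk'
  have hs0 : suspS z ≠ 0 := by
    intro h; apply hn; simp only [negFace, mem_ofPred_eq]; unfold suspS at h; linarith
  have hs1 : 1 - suspS z ≠ 0 := by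
    intro h; apply hp; simp only [posFace, mem_ofPred_eq]; unfold suspS at h; linarith
  funext l
  apply Subtype.ext
  by_cases hl : l = 0
  · subst hl
    unfold suspS at hs; linarith
  · have hj : Equiv.swap 0 k l ≠ k := by
      intro h
      have := congrArg (Equiv.swap 0 k) h
      simp at this
      exact hl this
    have := hR (Equiv.swap 0 k l)
    simp only [suspR, hj, if_false, ← hs, Equiv.swap_apply_self] at this
    have h2 : suspS z * (1 - suspS z) * ((z l : ℝ) - w l) = 0 := by linear_combination this
    rcases mul_eq_zero.1 h2 with h | h
    · exact absurd h (mul_ne_zero hs0 hs1)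
    · linarith

/-- If `S ⊆ Q` is weakly infinite dimensional, then `Q \ S` is continuum
connected: any two of its points lie in a compact connected subset of `Q \ S`. -/
theorem continuumConnected_compl_of_weaklyInfiniteDimensional
    (S : Set HilbertCube) (hS : ¬ StronglyInfiniteDimensional S) :
    ∀ x ∈ Sᶜ, ∀ y ∈ Sᶜ, ∃ C : Set HilbertCube,
      C ⊆ Sᶜ ∧ IsCompact C ∧ IsConnected C ∧ x ∈ C ∧ y ∈ C := by
  intro x hx y hy
  by_cases hxy : x = y
  · subst hxy
    exact ⟨{x}, by simpa using hx, isCompact_singleton, isConnected_singleton, rfl, rfl⟩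
  obtain ⟨k, hk⟩ := Function.ne_iff.1 hxy
  have hc := susp_continuous x y k
  have hT : ¬ StronglyInfiniteDimensional (susp x y k ⁻¹' S) := by
    intro hst
    apply hS
    refine strong_of_closedEmbedding (S.restrictPreimage (susp x y k))
      (Topology.IsClosedEmbedding.of_continuous_injective_isClosedMap hc.restrictPreimage ?_
        (hc.isClosedMap.restrictPreimage S)) hst
    rintro ⟨z, hz⟩ ⟨w, hw⟩ h
    apply Subtype.ext
    refine susp_inj x y k hk z w ?_ ?_ (congrArg Subtype.val h)
    · intro hn; apply hx; rw [← susp_neg x y k z hn]; exact hz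
    · intro hn; apply hy; rw [← susp_pos x y k z hn]; exact hz
  obtain ⟨C, hC, h1, h2, ⟨a, ha, han⟩, ⟨b, hb, hbp⟩⟩ := weak_miss _ hT
  refine ⟨susp x y k '' C, ?_, h1.image hc, h2.image _ hc.continuousOn,
    ⟨a, ha, susp_neg x y k a han⟩, ⟨b, hb, susp_pos x y k b hbp⟩⟩
  rintro _ ⟨z, hz, rfl⟩
  exact hC hz
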